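/- arXiv:2003.04990 — 3 statements merged into one kernel-verified Lean document; each statement's English description precedes it below -/
import Mathlib

section
/- Let d ≥ 1 and N ≥ 1 be integers, and let s_d be the d-th term of Sylvester's sequence. Then in the hat guessing game on G_d(N) with s_d colors, the players have no winning strategy; that is, for every assignment to each vertex v of a function g_v from s_d-colorings of its neighborhood to {1,…,s_d}, there exists an s_d-coloring χ of the vertices such that every vertex v satisfies g_v(χ restricted to N(v)) ≠ χ(v). Consequently HG(G_d(N)) < s_d. -/
/-- A winning guessing strategy in the hat guessing game on `G` with `q` colors:
each vertex `v` gets a guessing function from colorings of its open neighborhood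
to colors, such that for every coloring some vertex guesses its own color. -/
def HatWinning {V : Type*} (G : SimpleGraph V) (q : ℕ) : Prop :=
  ∃ g : (v : V) → ({w : V // G.Adj v w} → Fin q) → Fin q,
    ∀ χ : V → Fin q, ∃ v : V, g v (fun w => χ w.1) = χ v

/-- The hat guessing number of `G`: the largest number of colors for which the
players have a winning strategy. -/
noncomputable def hatGuessingNumber {V : Type*} (G : SimpleGraph V) : ℕ :=
  sSup {q : ℕ | HatWinning G q}

/-- Sylvester's sequence: `s 0 = 2`, `s (n+1) = s n ^ 2 - s n + 1`. -/
def sylvester : ℕ → ℕ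
  | 0 => 2
  | n + 1 => sylvester n ^ 2 - sylvester n + 1

/-- The graph `G_d(N)`: vertices are the vertices of the complete rooted `N`-ary
tree of depth `d` (encoded as lists of child-indices of length at most `d`), and
each vertex is adjacent to all of its ancestors (its proper prefixes). -/
def ancTree (d N : ℕ) : SimpleGraph {l : List (Fin N) // l.length ≤ d} where
  Adj v w := v ≠ w ∧ (v.1 <+: w.1 ∨ w.1 <+: v.1)
  symm := by
    constructor
    intro v w h
    exact ⟨h.1.symm, h.2.symm⟩
  loopless := by
    constructor
    intro v h
    exact h.1 rfl

/-- The book graph `B_{d,n}`: a spine of `d` vertices forming a clique, completely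
joined to `n` pages forming an independent set. -/
def bookGraph (d n : ℕ) : SimpleGraph (Fin d ⊕ Fin n) where
  Adj x y := x ≠ y ∧ (x.isLeft ∨ y.isLeft)
  symm := by
    constructor
    intro x y h
    exact ⟨h.1.symm, h.2.symm⟩
  loopless := by
    constructor
    intro x h
    exact h.1 rfl

/-- A set `S ⊆ ℕ^d` is coverable if it can be partitioned into parts `S_1, …, S_d`
such that `S_i` contains at most one point on every line parallel to the `i`-th
coordinate axis, i.e. two distinct points in part `i` differ in some coordinate
other than the `i`-th. -/
def Coverable {d : ℕ} (S : Set (Fin d → ℕ)) : Prop :=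
  ∃ f : (Fin d → ℕ) → Fin d, ∀ x ∈ S, ∀ y ∈ S,
    x ≠ y → f x = f y → ∃ j : Fin d, j ≠ f x ∧ x j ≠ y j

/-- `hcov d` is `h(ℕ^d)`: the largest `t` such that every `t`-element subset of
`ℕ^d` is coverable. -/
noncomputable def hcov (d : ℕ) : ℕ :=
  sSup {t : ℕ | ∀ S : Set (Fin d → ℕ), S.Finite → S.ncard = t → Coverable S}

/-- `p` is a left-to-right path with `k` edges in a graph on `Fin n` with the
natural vertex ordering: a strictly increasing sequence of `k+1` vertices in which
consecutive vertices are adjacent. -/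
def IsLTRPath {n : ℕ} (G : SimpleGraph (Fin n)) (k : ℕ) (p : Fin (k + 1) → Fin n) : Prop :=
  StrictMono p ∧ ∀ i : Fin k, G.Adj (p i.castSucc) (p i.succ)

/-- The depth of a vertex `v`: the largest number of edges in a left-to-right path
ending at `v`. -/
noncomputable def ltrDepth {n : ℕ} (G : SimpleGraph (Fin n)) (v : Fin n) : ℕ :=
  sSup {k : ℕ | ∃ p : Fin (k + 1) → Fin n, IsLTRPath G k p ∧ p (Fin.last k) = v}

/-!
Order the layers of the graph from the bottom up and remove them one at a time. Fix a palette of `r`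
colors for the lowest layer `R`, where every vertex names fewer than `r` colors. A vertex `w`
outside `R` has at most one neighbor in `R`, so taking the union of its guesses over the `r` palette
colors of that neighbor makes it name at most `r (r - 1)` colors, independently of `R`. Once the
rest of the graph is colored so as to avoid all these unions, each vertex of the independent set `R`
still has a palette color that it does not name. Hence the bound `r` becomes `r ^ 2 - r + 1`, which
is the recursion of Sylvester's sequence, started at `r = 2` for a single guess per vertex.
-/

lemma monotone_sylvester : Monotone sylvester := by
  refine monotone_nat_of_le_succ fun n => ?_
  have h : 2 * sylvester n ≤ sylvester n ^ 2 + 1 := by nlinarith [sq_nonneg ((sylvester n : ℤ) - 1)]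
  rw [sylvester]
  omega

lemma sylvester_pos (n : ℕ) : 0 < sylvester n :=
  two_pos.trans_le (monotone_sylvester n.zero_le)

lemma hatGuessingNumber_lt {V : Type*} {G : SimpleGraph V} {n : ℕ} (hn : 0 < n)
    (h : ∀ q, HatWinning G q → q < n) : hatGuessingNumber G < n :=
  Nat.lt_of_le_sub_one hn (csSup_le' fun q hq => Nat.le_sub_one_of_lt (h q hq))

/-- A winning strategy with `q` colors in the hat guessing game on `G` where every vertex names a
set of fewer than `r` colors, hoping that it contains its own. The bound is strict so that the
relevant values of `r` are the terms of Sylvester's sequence, without a shift by one. -/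
def MultiHatWinning {V : Type*} (G : SimpleGraph V) (q r : ℕ) : Prop :=
  ∃ g : (v : V) → ({w : V // G.Adj v w} → Fin q) → Finset (Fin q),
    (∀ v x, (g v x).card < r) ∧ ∀ χ : V → Fin q, ∃ v : V, χ v ∈ g v (fun w => χ w.1)

lemma HatWinning.multiHatWinning {V : Type*} {G : SimpleGraph V} {q : ℕ} :
    HatWinning G q → MultiHatWinning G q 2 := by
  rintro ⟨g, hg⟩
  refine ⟨fun v x => {g v x}, fun v x => by simp only [Finset.card_singleton, Nat.one_lt_two], ?_⟩
  intro χ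
  obtain ⟨v, hv⟩ := hg χ
  exact ⟨v, Finset.mem_singleton.mpr hv.symm⟩

lemma exists_mem_forall_eq_of_subsingleton {α β : Type*} {S : Set α} {A : Set β} {f : α → β}
    (hS : S.Subsingleton) (hA : A.Nonempty) (hf : Set.MapsTo f S A) :
    ∃ a ∈ A, ∀ u ∈ S, f u = a := by
  rcases hS.eq_empty_or_singleton with rfl | ⟨u, rfl⟩
  · exact ⟨hA.some, hA.some_mem, fun _ hu => hu.elim⟩
  · exact ⟨f u, hf rfl, fun _ hu => congrArg f hu⟩

lemma MultiHatWinning.induce_compl {V : Type*} {G : SimpleGraph V} {q r : ℕ} {R : Set V}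
    (hindep : G.IsIndepSet R) (hnbr : ∀ w ∉ R, (G.neighborSet w ∩ R).Subsingleton) (hrq : r ≤ q)
    (h : MultiHatWinning G q r) : MultiHatWinning (G.induce Rᶜ) q (r ^ 2 - r + 1) := by
  classical
  obtain ⟨g, hcard, hwin⟩ := h
  obtain ⟨A, -, hA⟩ := Finset.exists_subset_card_eq (hrq.trans_eq (Finset.card_fin q).symm)
  refine ⟨fun w x => A.biUnion fun c => g w fun u =>
    if hu : u.1 ∈ R then c else x ⟨⟨u, hu⟩, u.2⟩, fun w x => ?_, fun χ => ?_⟩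
  · calc
      _ ≤ A.card * (r - 1) :=
        Finset.card_biUnion_le_card_mul _ _ _ fun c _ => Nat.le_sub_one_of_lt (hcard w _)
      _ = r ^ 2 - r := by rw [hA, Nat.mul_sub_one, sq]
      _ < r ^ 2 - r + 1 := Nat.lt_succ_self _
  · by_contra! havoid
    have notMem_of_adj {v : V} (hv : v ∈ R) (u : {u // G.Adj v u}) : u.1 ∉ R := fun hu =>
      hindep hv hu u.2.ne u.2
    have exists_free_color (v : V) (hv : v ∈ R) :
        ∃ c ∈ A, c ∉ g v fun u => χ ⟨u.1, notMem_of_adj hv u⟩ :=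
      Finset.exists_mem_notMem_of_card_lt_card ((hcard v _).trans_eq hA.symm)
    choose c hcA hc using exists_free_color
    let χ' (v : V) : Fin q := if hv : v ∈ R then c v hv else χ ⟨v, hv⟩
    have hχ'_mem {v : V} (hv : v ∈ R) : χ' v = c v hv := dif_pos hv
    have hχ'_notMem {v : V} (hv : v ∉ R) : χ' v = χ ⟨v, hv⟩ := dif_neg hv
    obtain ⟨v, hguess⟩ := hwin χ'
    by_cases hv : v ∈ R
    · have hsees : (fun u : {u // G.Adj v u} => χ' u) = fun u => χ ⟨u.1, notMem_of_adj hv u⟩ :=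
        funext fun u => hχ'_notMem (notMem_of_adj hv u)
      rw [hsees, hχ'_mem hv] at hguess
      exact hc v hv hguess
    · have hA₀ : A.Nonempty := Finset.card_pos.mp (hA ▸ Nat.zero_lt_of_lt (hcard v fun u => χ' u))
      obtain ⟨a, haA, ha⟩ := exists_mem_forall_eq_of_subsingleton (f := χ') (hnbr v hv) hA₀
        fun u hu => by rw [hχ'_mem hu.2]; exact hcA u hu.2
      have hsees : (fun u : {u // G.Adj v u} => χ' u) =
          fun u => if hu : u.1 ∈ R then a else χ ⟨u.1, hu⟩ := by
        funext u
        split_ifs with hu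
        exacts [ha u ⟨u.2, hu⟩, hχ'_notMem hu]
      rw [hsees, hχ'_notMem hv] at hguess
      exact havoid ⟨v, hv⟩ (Finset.mem_biUnion.mpr ⟨a, haA, hguess⟩)

lemma not_multiHatWinning_sylvester_of_layering {V : Type*} {G : SimpleGraph V} {k d q : ℕ}
    (ℓ : G.Coloring ℕ) (hk : ∀ v, k ≤ ℓ v) (hd : ∀ v, ℓ v ≤ d)
    (hℓ : ∀ v, Set.InjOn ℓ {w | G.Adj v w ∧ ℓ w < ℓ v}) (hq : sylvester d ≤ q) :
    ¬ MultiHatWinning G q (sylvester k) := by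
  intro h
  let R : Set V := {v | ℓ v = k}
  have lt_of_notMem {v : V} (hv : v ∉ R) : k < ℓ v := (hk v).lt_of_ne' hv
  have hkd : k ≤ d := by
    obtain ⟨g, -, hwin⟩ := h
    obtain ⟨v, -⟩ := hwin fun _ => ⟨0, (sylvester_pos d).trans_le hq⟩
    exact (hk v).trans (hd v)
  have hindep : G.IsIndepSet R := fun v hv w hw _ hvw => ℓ.valid hvw (hv.trans hw.symm)
  have hnbr (w : V) (hw : w ∉ R) : (G.neighborSet w ∩ R).Subsingleton := by
    rintro u ⟨hwu, hu⟩ u' ⟨hwu', hu'⟩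
    exact hℓ w ⟨hwu, hu.trans_lt (lt_of_notMem hw)⟩ ⟨hwu', hu'.trans_lt (lt_of_notMem hw)⟩
      (hu.trans hu'.symm)
  refine not_multiHatWinning_sylvester_of_layering (k := k + 1)
    (ℓ.comp (SimpleGraph.Embedding.induce Rᶜ).toHom) (fun v => lt_of_notMem v.2) (fun v => hd v)
    (fun v u hu w hw huw => Subtype.ext (hℓ v hu hw huw)) hq
    (h.induce_compl hindep hnbr ((monotone_sylvester hkd).trans hq))
termination_by d + 1 - k

/-- The coloring `ℓ` plays the role of the depth in a rooted forest: the neighbors of a vertex that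
lie below it are in distinct layers, like the ancestors of a vertex of `ancTree d N`. -/
theorem hatGuessing_ancTree_upper_general {V : Type*} {G : SimpleGraph V} {d : ℕ}
    (ℓ : G.Coloring ℕ) (hd : ∀ v, ℓ v ≤ d)
    (hℓ : ∀ v, Set.InjOn ℓ {w | G.Adj v w ∧ ℓ w < ℓ v}) :
    ¬ HatWinning G (sylvester d) ∧ hatGuessingNumber G < sylvester d := by
  have not_winning {q : ℕ} (hq : sylvester d ≤ q) : ¬ HatWinning G q := fun h =>
    not_multiHatWinning_sylvester_of_layering ℓ (fun v => (ℓ v).zero_le) hd hℓ hq h.multiHatWinning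
  exact ⟨not_winning le_rfl, hatGuessingNumber_lt (sylvester_pos d) fun q h =>
    lt_of_not_ge fun hq => not_winning hq h⟩

/-- The depth of a vertex of `ancTree d N`, as a proper coloring: the layering along which the
general bound is applied. -/
def ancTreeDepth (d N : ℕ) : (ancTree d N).Coloring ℕ :=
  SimpleGraph.Coloring.mk (fun v => v.1.length) fun {_ _} hvw hlen =>
    hvw.1 <| Subtype.ext <|
      hvw.2.elim (·.eq_of_length hlen) fun h => (h.eq_of_length hlen.symm).symm

lemma prefix_of_ancTree_adj {d N : ℕ} {v w : {l : List (Fin N) // l.length ≤ d}}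
    (h : (ancTree d N).Adj v w) (hlt : ancTreeDepth d N w < ancTreeDepth d N v) : w.1 <+: v.1 :=
  h.2.resolve_left fun hvw => hvw.length_le.not_gt hlt

lemma injOn_ancTreeDepth {d N : ℕ} (v : {l : List (Fin N) // l.length ≤ d}) :
    Set.InjOn (ancTreeDepth d N)
      {w | (ancTree d N).Adj v w ∧ ancTreeDepth d N w < ancTreeDepth d N v} := by
  rintro u ⟨hvu, hu⟩ w ⟨hvw, hw⟩ (huw : u.1.length = w.1.length)
  have hpre : u.1 <+: w.1 :=
    List.prefix_of_prefix_length_le (prefix_of_ancTree_adj hvu hu)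
      (prefix_of_ancTree_adj hvw hw) huw.le
  exact Subtype.ext (hpre.eq_of_length huw)

/-- Upper bound in Theorem 1: with `s_d` colors the players have no winning
strategy on `G_d(N)`; consequently `HG(G_d(N)) < s_d`. -/
theorem hatGuessing_ancTree_upper (d N : ℕ) (hd : 1 ≤ d) (hN : 1 ≤ N) :
    ¬ HatWinning (ancTree d N) (sylvester d) ∧
      hatGuessingNumber (ancTree d N) < sylvester d :=
  hatGuessing_ancTree_upper_general (ancTreeDepth d N) (fun v => v.2) injOn_ancTreeDepth
end

section
/- Let d ≥ 1 and n ≥ 1 be integers, and set q = h(ℕ^d) + 1, where h(ℕ^d) is the largest t such that every t-element subset of ℕ^d is coverable. Then in the hat guessing game on the book graph B_{d,n} with q + 1 colors, the players have no winning strategy; that is, for every assignment to each vertex v of a function g_v from (q+1)-colorings of its neighborhood to {1,…,q+1}, there exists a (q+1)-coloring χ of the vertices such that every vertex v satisfies g_v(χ restricted to N(v)) ≠ χ(v). Consequently HG(B_{d,n}) ≤ h(ℕ^d) + 1 for all n. -/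
/-! Let `S ⊆ ℕ^d` be a set of fewer than `q` points and suppose the players win on `B_{d,n}` with
`q` colors. After relabelling each coordinate injectively, the points of `S` are colorings of the
spine. A page sees only the spine, so over all of `S` it makes fewer than `q` different guesses;
give it a color it never guesses. With the pages fixed in this way, at each point of `S` some spine
vertex must guess correctly, and sorting `S` by such a vertex is a covering: the guess of the `i`-th
spine vertex does not depend on the `i`-th coordinate. Hence every set of fewer than `q` points is
coverable, so `q ≤ h(ℕ^d) + 1`. That `h(ℕ^d)` is finite comes from counting points in a large grid.
-/

section LineCover

variable {ι α β : Type*}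

/-- `f` covers `S` by lines: the part `{x ∈ S | f x = i}` meets each line parallel to the `i`-th
axis in at most one point. Points on such a line are those with the same restriction to `{i}ᶜ`. This
is the witness of `Coverable`, for an arbitrary index type and arbitrary coordinates. -/
def IsLineCover (f : (ι → α) → ι) (S : Set (ι → α)) : Prop :=
  ∀ i, Set.InjOn (Set.domRestrict ({i}ᶜ : Set ι)) {x ∈ S | f x = i}

theorem coverable_iff_exists_isLineCover {d : ℕ} {S : Set (Fin d → ℕ)} :
    Coverable S ↔ ∃ f, IsLineCover f S := by
  refine exists_congr fun f => ⟨fun hf i x hx y hy hxy => ?_, fun hf x hx y hy hne hfxy => ?_⟩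
  · by_contra hne
    obtain ⟨j, hj, hxyj⟩ := hf x hx.1 y hy.1 hne (hx.2.trans hy.2.symm)
    exact hxyj (congrFun hxy ⟨j, hx.2 ▸ hj⟩)
  · by_contra! hcon
    exact hne (hf (f x) ⟨hx, rfl⟩ ⟨hy, hfxy.symm⟩ (funext fun j => hcon j j.2))

theorem Coverable.mono {d : ℕ} {S T : Set (Fin d → ℕ)} (hST : S ⊆ T) (hT : Coverable T) :
    Coverable S := by
  obtain ⟨f, hf⟩ := hT
  exact ⟨f, fun x hx y hy => hf x (hST hx) y (hST hy)⟩

theorem IsLineCover.comp_piMap {e : ι → α → β} {f : (ι → β) → ι} {S : Set (ι → α)}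
    (hf : IsLineCover f (Pi.map e '' S)) (he : Set.InjOn (Pi.map e) S) :
    IsLineCover (f ∘ Pi.map e) S := by
  rintro i x ⟨hxS, hx⟩ y ⟨hyS, hy⟩ hxy
  refine he hxS hyS (hf i ⟨⟨x, hxS, rfl⟩, hx⟩ ⟨⟨y, hyS, rfl⟩, hy⟩ ?_)
  exact funext fun j => congrArg (e j) (congrFun hxy j)

theorem exists_injOn_piMap [Nonempty β] {S : Set (ι → α)} (hS : S.Finite)
    (hcard : S.encard ≤ ENat.card β) : ∃ e : ι → α → β, Set.InjOn (Pi.map e) S := by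
  have hcoord (j : ι) : ∃ e : α → β, Set.InjOn e (Function.eval j '' S) := by
    have hle : (Function.eval j '' S).encard ≤ (Set.univ : Set β).encard :=
      (Set.encard_image_le _ _).trans (hcard.trans_eq (Set.encard_univ β).symm)
    obtain ⟨e, -, he⟩ := (hS.image _).exists_injOn_of_encard_le hle
    exact ⟨e, he⟩
  choose e he using hcoord
  exact ⟨e, fun x hx y hy hxy => funext fun j => he j ⟨x, hx, rfl⟩ ⟨y, hy, rfl⟩ (congrFun hxy j)⟩

variable [Fintype ι] [DecidableEq ι] {f : (ι → α) → ι} {A : Finset α}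

theorem IsLineCover.card_filter_eq_le
    (hf : IsLineCover f (Fintype.piFinset fun _ : ι => A : Set (ι → α))) (i : ι) :
    ((Fintype.piFinset fun _ : ι => A).filter (f · = i)).card ≤
      A.card ^ (Fintype.card ι - 1) := by
  calc ((Fintype.piFinset fun _ : ι => A).filter (f · = i)).card
      ≤ (Fintype.piFinset fun _ : ({i}ᶜ : Set ι) => A).card := by
        refine Finset.card_le_card_of_injOn (Set.domRestrict {i}ᶜ) (fun x hx => ?_) ?_
        · have hxA := Fintype.mem_piFinset.1 (Finset.mem_filter.1 hx).1
          exact Fintype.mem_piFinset.2 fun j => hxA j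
        · simpa only [Finset.coe_filter, Finset.mem_coe] using hf i
    _ = A.card ^ (Fintype.card ι - 1) := by
        rw [Fintype.card_piFinset, Finset.prod_const, Finset.card_univ, Fintype.card_compl_set,
          Set.card_singleton]

theorem IsLineCover.card_le_of_piFinset
    (hf : IsLineCover f (Fintype.piFinset fun _ : ι => A : Set (ι → α))) :
    A.card ≤ Fintype.card ι := by
  obtain rfl | ⟨a, ha⟩ := A.eq_empty_or_nonempty
  · exact Nat.zero_le _
  have hι : Fintype.card ι ≠ 0 := (Fintype.card_pos_iff.2 ⟨f fun _ => a⟩).ne'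
  have hpos : 0 < A.card ^ (Fintype.card ι - 1) := pow_pos (Finset.card_pos.2 ⟨a, ha⟩) _
  refine Nat.le_of_mul_le_mul_left ?_ hpos
  calc A.card ^ (Fintype.card ι - 1) * A.card
      = (Fintype.piFinset fun _ : ι => A).card := by
        rw [pow_sub_one_mul hι, Fintype.card_piFinset, Finset.prod_const, Finset.card_univ]
    _ ≤ A.card ^ (Fintype.card ι - 1) * Fintype.card ι :=
        Finset.card_le_mul_card_image_of_maps_to (fun x _ => Finset.mem_univ (f x)) _
          fun i _ => hf.card_filter_eq_le i

end LineCover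

section CoveringNumber

variable {d : ℕ}

theorem not_coverable_piFinset_range :
    ¬ Coverable (Fintype.piFinset fun _ : Fin d => Finset.range (d + 1) : Set (Fin d → ℕ)) := by
  rw [coverable_iff_exists_isLineCover]
  rintro ⟨f, hf⟩
  simpa using hf.card_le_of_piFinset

theorem lt_card_of_forall_coverable [NeZero d] {t : ℕ} {G : Finset (Fin d → ℕ)}
    (ht : ∀ S : Set (Fin d → ℕ), S.Finite → S.ncard = t → Coverable S)
    (hG : ¬ Coverable (G : Set (Fin d → ℕ))) : t < G.card := by
  by_contra! hle
  obtain ⟨T, hGT, hT⟩ := Infinite.exists_superset_card_eq G t hle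
  have hcov : Coverable (T : Set (Fin d → ℕ)) :=
    ht T T.finite_toSet ((Set.ncard_coe_finset T).trans hT)
  exact hG (hcov.mono (Finset.coe_subset.2 hGT))

theorem exists_not_coverable_ncard_eq_hcov_add_one [NeZero d] :
    ∃ S : Set (Fin d → ℕ), S.Finite ∧ S.ncard = hcov d + 1 ∧ ¬ Coverable S := by
  by_contra! hcon
  have hbdd : BddAbove
      {t : ℕ | ∀ S : Set (Fin d → ℕ), S.Finite → S.ncard = t → Coverable S} :=
    ⟨_, fun _ ht => (lt_card_of_forall_coverable ht not_coverable_piFinset_range).le⟩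
  exact (Nat.lt_succ_self _).not_ge (le_csSup hbdd hcon)

end CoveringNumber

section Strategy

variable {V : Type*} {G : SimpleGraph V} {q : ℕ}

/-- A guessing strategy on `G` with `q` colors, the object `HatWinning` quantifies over. -/
abbrev HatStrategy (G : SimpleGraph V) (q : ℕ) : Type _ :=
  (v : V) → ({w : V // G.Adj v w} → Fin q) → Fin q

/-- The guess of the vertex `v` under the strategy `g` when the graph is colored by `χ`. -/
def HatStrategy.guess (g : HatStrategy G q) (χ : V → Fin q) (v : V) : Fin q :=
  g v fun w => χ w.1

theorem HatStrategy.guess_congr (g : HatStrategy G q) {χ χ' : V → Fin q} {v : V}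
    (h : ∀ w, G.Adj v w → χ w = χ' w) : g.guess χ v = g.guess χ' v :=
  congrArg (g v) (funext fun w => h w.1 w.2)

end Strategy

section BookGraph

variable {d n q : ℕ} (g : HatStrategy (bookGraph d n) q)

theorem HatStrategy.guess_page_congr (s : Fin d → Fin q) (c c' : Fin n → Fin q) (v : Fin n) :
    g.guess (Sum.elim s c) (.inr v) = g.guess (Sum.elim s c') (.inr v) := by
  refine g.guess_congr fun w hw => ?_
  rcases w with j | u
  · rfl
  · simp [bookGraph] at hw

theorem HatStrategy.guess_spine_congr {s t : Fin d → Fin q} (c : Fin n → Fin q) {i : Fin d}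
    (h : Set.domRestrict {i}ᶜ s = Set.domRestrict {i}ᶜ t) :
    g.guess (Sum.elim s c) (.inl i) = g.guess (Sum.elim t c) (.inl i) := by
  refine g.guess_congr fun w hw => ?_
  rcases w with j | u
  · exact congrFun h ⟨j, fun hj => hw.ne (congrArg Sum.inl hj).symm⟩
  · rfl

theorem HatStrategy.exists_forall_guess_page_ne {T : Set (Fin d → Fin q)} (hT : T.ncard < q) :
    ∃ c : Fin n → Fin q, ∀ s ∈ T, ∀ v, g.guess (Sum.elim s c) (.inr v) ≠ c v := by
  have : NeZero q := ⟨by omega⟩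
  have hpage (v : Fin n) : ∃ a, ∀ s ∈ T, g.guess (Sum.elim s 0) (.inr v) ≠ a := by
    by_contra! hsurj
    have hle : (Set.univ : Set (Fin q)).ncard ≤ T.ncard :=
      Set.eq_univ_of_forall hsurj ▸ Set.ncard_image_le T.toFinite
    rw [Set.ncard_univ, Nat.card_fin] at hle
    omega
  choose c hc using hpage
  exact ⟨c, fun s hs v => g.guess_page_congr s c 0 v ▸ hc v s hs⟩

theorem HatStrategy.exists_isLineCover [NeZero d] {T : Set (Fin d → Fin q)} {c : Fin n → Fin q}
    (hT : ∀ s ∈ T, ∃ i, g.guess (Sum.elim s c) (.inl i) = s i) : ∃ f, IsLineCover f T := by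
  choose! f hf using hT
  refine ⟨f, fun i s ⟨hs, hsi⟩ t ⟨ht, hti⟩ hst => funext fun j => ?_⟩
  obtain rfl | hj := eq_or_ne j i
  · calc s j = g.guess (Sum.elim s c) (.inl j) := (hsi ▸ hf s hs).symm
      _ = g.guess (Sum.elim t c) (.inl j) := g.guess_spine_congr c hst
      _ = t j := hti ▸ hf t ht
  · exact congrFun hst ⟨j, hj⟩

theorem HatWinning.exists_isLineCover [NeZero d] (hwin : HatWinning (bookGraph d n) q)
    {T : Set (Fin d → Fin q)} (hT : T.ncard < q) : ∃ f, IsLineCover f T := by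
  obtain ⟨g, hg⟩ : ∃ g : HatStrategy (bookGraph d n) q, ∀ χ, ∃ v, g.guess χ v = χ v := hwin
  obtain ⟨c, hc⟩ := g.exists_forall_guess_page_ne hT
  refine g.exists_isLineCover (c := c) fun s hs => ?_
  obtain ⟨i | v, hguess⟩ := hg (Sum.elim s c)
  · exact ⟨i, hguess⟩
  · exact absurd hguess (hc s hs v)

theorem HatWinning.coverable [NeZero d] (hwin : HatWinning (bookGraph d n) q)
    {S : Set (Fin d → ℕ)} (hS : S.Finite) (hcard : S.ncard < q) : Coverable S := by
  have : NeZero q := ⟨by omega⟩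
  have hle : S.encard ≤ ENat.card (Fin q) := by
    rw [← hS.cast_ncard_eq, ENat.card_eq_coe_fintype_card, Fintype.card_fin]
    exact_mod_cast hcard.le
  obtain ⟨e, he⟩ := exists_injOn_piMap hS hle
  obtain ⟨f, hf⟩ := hwin.exists_isLineCover ((Set.ncard_image_le hS).trans_lt hcard)
  exact coverable_iff_exists_isLineCover.2 ⟨_, hf.comp_piMap he⟩

theorem HatWinning.le_hcov_add_one [NeZero d] (hwin : HatWinning (bookGraph d n) q) :
    q ≤ hcov d + 1 := by
  obtain ⟨S, hS, hcard, hnot⟩ := exists_not_coverable_ncard_eq_hcov_add_one (d := d)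
  by_contra! hlt
  exact hnot (hwin.coverable hS (hcard ▸ hlt))

end BookGraph

/-- Upper bound of Lemma 5: with `q + 1` colors, where `q = h(ℕ^d) + 1`, the
players have no winning strategy on `B_{d,n}`; consequently
`HG(B_{d,n}) ≤ h(ℕ^d) + 1` for all `n`. -/
theorem hatGuessing_book_le (d n : ℕ) (hd : 1 ≤ d) (hn : 1 ≤ n)
    (q : ℕ) (hq : q = hcov d + 1) :
    ¬ HatWinning (bookGraph d n) (q + 1) ∧
      hatGuessingNumber (bookGraph d n) ≤ hcov d + 1 := by
  have : NeZero d := ⟨Nat.one_le_iff_ne_zero.1 hd⟩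
  refine ⟨fun hwin => ?_, csSup_le' fun _ hwin => hwin.le_hcov_add_one⟩
  have := hwin.le_hcov_add_one
  omega
end

section
/- Sylvester's sequence, defined by s_0 = 2 and s_n = s_{n−1}^2 − s_{n−1} + 1 for n ≥ 1, satisfies s_n = s_0 · s_1 ⋯ s_{n−1} + 1 for all n ≥ 1; consequently s_d − 1 ≥ 2^{2^{d−1}} for all d ≥ 1, so for each d ≥ 1 there exists a d-degenerate graph G with HG(G) ≥ 2^{2^{d−1}}. -/
/-! Let every vertex make `s` guesses instead of one. If `s * (s + 1)` guesses per vertex win on `G`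
against a set `C` of colors, then `s` guesses win on the cone over disjoint copies of `G` indexed by
the `(s + 1)`-subsets `T` of `C`. In the copy `T`, the guesses of each vertex are distributed over
the elements of `T`, at most `s` to each, and the vertex uses those attached to the color it sees at
the apex. Fix a coloring of the copies. The apex colors for which nobody below guesses correctly
cannot include all of an `(s + 1)`-set `T`, since some vertex of the copy `T` has its color among
its `s * (s + 1)` original guesses; so there are at most `s` such colors, and the apex guesses them.
A cone raises the degeneracy by at most one, and starting from one guess, `d` steps reach
`sylvester d - 1` colors, because this number satisfies the recursion `s ↦ s * (s + 1)`. -/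

/-- The `s`-th pronic number. This is the recursion satisfied by `sylvester n - 1`,
and the number of guesses traded for one extra level in the construction of the graphs. -/
def pronic (s : ℕ) : ℕ := s * (s + 1)

theorem sylvester_eq_iterate_pronic_add_one (n : ℕ) : sylvester n = pronic^[n] 1 + 1 := by
  induction n with
  | zero => rfl
  | succ n ih =>
    rw [sylvester, ih, Function.iterate_succ_apply', pronic, sq, ← Nat.mul_sub_one,
      Nat.add_sub_cancel, mul_comm]

theorem prod_range_sylvester (n : ℕ) : ∏ k ∈ Finset.range n, sylvester k = pronic^[n] 1 := by
  induction n with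
  | zero => rfl
  | succ n ih =>
    rw [Finset.prod_range_succ, ih, sylvester_eq_iterate_pronic_add_one,
      Function.iterate_succ_apply', pronic]

theorem sq_le_pronic (s : ℕ) : s ^ 2 ≤ pronic s := by
  rw [sq]
  exact Nat.mul_le_mul_left s s.le_succ

theorem iterate_pronic_pos (n : ℕ) {s : ℕ} (hs : 0 < s) : 0 < pronic^[n] s := by
  induction n generalizing s with
  | zero => exact hs
  | succ _ ih => exact ih (Nat.mul_pos hs s.succ_pos)

theorem two_pow_two_pow_le_iterate_pronic (n : ℕ) : 2 ^ 2 ^ n ≤ pronic^[n + 1] 1 := by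
  induction n with
  | zero => rfl
  | succ n ih =>
    calc 2 ^ 2 ^ (n + 1) = (2 ^ 2 ^ n) ^ 2 := by rw [pow_succ, pow_mul]
      _ ≤ (pronic^[n + 1] 1) ^ 2 := Nat.pow_le_pow_left ih 2
      _ ≤ pronic (pronic^[n + 1] 1) := sq_le_pronic _
      _ = pronic^[n + 1 + 1] 1 := (Function.iterate_succ_apply' ..).symm

theorem two_pow_two_pow_le_sylvester_sub_one {d : ℕ} (hd : 1 ≤ d) :
    2 ^ 2 ^ (d - 1) ≤ sylvester d - 1 := by
  obtain ⟨n, rfl⟩ := Nat.exists_eq_add_of_le' hd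
  rw [sylvester_eq_iterate_pronic_add_one, Nat.add_sub_cancel, Nat.add_sub_cancel]
  exact two_pow_two_pow_le_iterate_pronic n

theorem exists_cover_card_le {α β : Type*} {A : Finset α} {T : Finset β} {s : ℕ}
    (h : A.card ≤ T.card * s) :
    ∃ P : β → Finset α, (∀ b, (P b).card ≤ s) ∧ ∀ a ∈ A, ∃ b ∈ T, a ∈ P b := by
  classical
  obtain ⟨e⟩ : Nonempty (A ↪ T × Fin s) :=
    Function.Embedding.nonempty_of_card_le (by simpa using h)
  let fiber (b : β) : Finset A := Finset.univ.filter fun a => (e a).1 = b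
  have hfiber (b : β) : (fiber b).card ≤ s := by
    have hinj : Set.InjOn (fun a => (e a).2) (fiber b) := fun x hx y hy hxy =>
      e.injective (Prod.ext (Subtype.ext (by simp_all [fiber])) hxy)
    simpa using Finset.card_le_card_of_injOn _ (fun _ _ => Finset.mem_univ _) hinj
  refine ⟨fun b => (fiber b).map (Function.Embedding.subtype _), fun b => ?_, fun a ha => ?_⟩
  · rw [Finset.card_map]
    exact hfiber b
  · exact ⟨(e ⟨a, ha⟩).1, (e ⟨a, ha⟩).1.2, by simp [fiber, ha]⟩

section HatGuessingNumber

variable {V W : Type*} {G : SimpleGraph V} {H : SimpleGraph W} {q : ℕ}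

theorem card_mul_card_filter_apply_eq_le {C : Type*} [Fintype V] [DecidableEq V] [Fintype C]
    [DecidableEq C] {v : V} {f : (V → C) → C}
    (hf : ∀ χ a, f (Function.update χ v a) = f χ) :
    Fintype.card C * (Finset.univ.filter fun χ => f χ = χ v).card ≤ Fintype.card (V → C) := by
  rw [← Finset.card_univ, ← Finset.card_product, ← Finset.card_univ]
  refine Finset.card_le_card_of_injOn (fun p => Function.update p.2 v p.1)
    (fun _ _ => Finset.mem_coe.mpr (Finset.mem_univ _)) ?_
  rintro ⟨a, χ⟩ hχ ⟨b, ψ⟩ hψ (heq : Function.update χ v a = Function.update ψ v b)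
  replace hχ : f χ = χ v := by simpa using hχ
  replace hψ : f ψ = ψ v := by simpa using hψ
  have hab : a = b := by simpa using congrFun heq v
  have hv : χ v = ψ v := by rw [← hχ, ← hψ, ← hf χ a, heq, hf]
  have hχψ : χ = ψ :=
    calc χ = Function.update (Function.update χ v a) v (χ v) := by simp
      _ = Function.update (Function.update ψ v b) v (ψ v) := by rw [heq, hv]
      _ = ψ := by simp
  rw [hab, hχψ]

/-- Each vertex guesses correctly on at most a `1 / q` fraction of all colorings. -/
theorem HatWinning.le_card [Fintype V] (h : HatWinning G q) : q ≤ Fintype.card V := by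
  classical
  rcases q.eq_zero_or_pos with rfl | hq
  · exact Nat.zero_le _
  have : NeZero q := ⟨hq.ne'⟩
  obtain ⟨g, hg⟩ := h
  let correct (v : V) : Finset (V → Fin q) :=
    Finset.univ.filter fun χ => g v (fun w => χ w.1) = χ v
  have hcorrect (v : V) : q * (correct v).card ≤ Fintype.card (V → Fin q) := by
    have hlocal (χ : V → Fin q) (a : Fin q) :
        g v (fun w => Function.update χ v a w.1) = g v (fun w => χ w.1) :=
      congrArg (g v) (funext fun w => Function.update_of_ne w.2.ne' a χ)
    simpa only [Fintype.card_fin] using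
      card_mul_card_filter_apply_eq_le (f := fun χ => g v fun w => χ w.1) hlocal
  have hcover : Finset.univ ⊆ Finset.univ.biUnion correct := fun χ _ => by
    simpa [correct] using hg χ
  refine Nat.le_of_mul_le_mul_right ?_ (Fintype.card_pos (α := V → Fin q))
  calc q * Fintype.card (V → Fin q) ≤ q * ∑ v, (correct v).card :=
        Nat.mul_le_mul_left q ((Finset.card_le_card hcover).trans Finset.card_biUnion_le)
    _ = ∑ v, q * (correct v).card := Finset.mul_sum ..
    _ ≤ ∑ _v : V, Fintype.card (V → Fin q) := Finset.sum_le_sum fun v _ => hcorrect v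
    _ = Fintype.card V * Fintype.card (V → Fin q) := by
      rw [Finset.sum_const, Finset.card_univ, smul_eq_mul]

theorem HatWinning.le_hatGuessingNumber [Finite V] (h : HatWinning G q) :
    q ≤ hatGuessingNumber G := by
  have := Fintype.ofFinite V
  exact le_csSup ⟨Fintype.card V, fun _ hp => HatWinning.le_card hp⟩ h

theorem HatWinning.of_iso (e : G ≃g H) (h : HatWinning G q) : HatWinning H q := by
  obtain ⟨g, hg⟩ := h
  have hadj {w : W} {v : V} (h : G.Adj (e.symm w) v) : H.Adj w (e v) := by
    simpa using e.map_adj_iff.mpr h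
  refine ⟨fun w c => g (e.symm w) fun v => c ⟨e v.1, hadj v.2⟩, fun χ => ?_⟩
  obtain ⟨v, hv⟩ := hg (χ ∘ e)
  obtain ⟨w, rfl⟩ := e.symm.surjective v
  exact ⟨w, by simpa using hv⟩

end HatGuessingNumber

section Degenerate

variable {V : Type*} {G : SimpleGraph V} {d : ℕ}

/-- `G` is `d`-degenerate: for some linear order on the vertices, every vertex has at most `d`
smaller neighbors. The count is `Set.encard`, so that infinite sets do not count as empty. -/
def IsDegenerate (G : SimpleGraph V) (d : ℕ) : Prop :=
  ∃ _ : LinearOrder V, ∀ v, {w | w < v ∧ G.Adj w v}.encard ≤ d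

/-- The graph obtained from `G` by adding a vertex, the apex `none`, adjacent to all others. -/
def cone (G : SimpleGraph V) : SimpleGraph (Option V) where
  Adj
    | none, none => False
    | some v, some w => G.Adj v w
    | _, _ => True
  symm.symm
    | none, none | none, some _ | some _, none => id
    | some _, some _ => fun h => h.symm
  loopless.irrefl
    | none => id
    | some v => G.loopless.irrefl v

theorem isDegenerate_bot : IsDegenerate (⊥ : SimpleGraph V) 0 := by
  obtain ⟨hlin, -⟩ := exists_wellFoundedLT V
  exact ⟨hlin, by simp⟩

theorem IsDegenerate.bot_boxProd {ι : Type*} (h : IsDegenerate G d) :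
    IsDegenerate ((⊥ : SimpleGraph ι) □ G) d := by
  obtain ⟨_, hdeg⟩ := h
  obtain ⟨_, -⟩ := exists_wellFoundedLT ι
  refine ⟨inferInstanceAs (LinearOrder (ι ×ₗ V)), fun ⟨i, v⟩ => ?_⟩
  refine (Set.encard_le_encard ?_).trans
    ((Set.encard_image_le (Prod.mk i) {w | w < v ∧ G.Adj w v}).trans (hdeg v))
  rintro ⟨j, w⟩ ⟨hlt, ⟨hij, -⟩ | ⟨hadj, rfl⟩⟩
  · exact hij.elim
  · have hlt' : w < v := ((Prod.Lex.lt_iff.mp hlt).resolve_left (lt_irrefl j)).2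
    exact ⟨w, ⟨hlt', hadj⟩, rfl⟩

theorem isDegenerate_cone (h : IsDegenerate G d) : IsDegenerate (cone G) (d + 1) := by
  obtain ⟨_, hdeg⟩ := h
  refine ⟨inferInstanceAs (LinearOrder (WithBot V)), ?_⟩
  rintro (_ | v)
  · have hempty : {w : WithBot V | w < ⊥ ∧ (cone G).Adj w none} = ∅ := by simp
    exact (Set.encard_eq_zero.mpr hempty).trans_le zero_le
  · refine (Set.encard_le_encard (t := insert none (some '' {w | w < v ∧ G.Adj w v})) ?_).trans
      ((Set.encard_insert_le _ _).trans ?_)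
    · rintro (_ | w) ⟨hlt, hadj⟩
      · exact Set.mem_insert _ _
      · exact Set.mem_insert_of_mem _ (Set.mem_image_of_mem _ ⟨WithBot.coe_lt_coe.mp hlt, hadj⟩)
    · exact add_le_add_left ((Set.encard_image_le _ _).trans (hdeg v)) 1

theorem IsDegenerate.exists_iso_fin [Fintype V] (h : IsDegenerate G d) :
    ∃ G' : SimpleGraph (Fin (Fintype.card V)), Nonempty (G ≃g G') ∧
      ∀ i, {j | j < i ∧ G'.Adj j i}.ncard ≤ d := by
  obtain ⟨_, hdeg⟩ := h
  let e : Fin (Fintype.card V) ≃o V := monoEquivOfFin V rfl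
  refine ⟨G.comap e, ⟨(SimpleGraph.Iso.comap e.toEquiv G).symm⟩, fun i => ?_⟩
  have hmaps : Set.MapsTo e {j | j < i ∧ (G.comap e).Adj j i} {w | w < e i ∧ G.Adj w (e i)} :=
    fun _ hj => ⟨e.lt_iff_lt.mpr hj.1, hj.2⟩
  have hle : {j | j < i ∧ (G.comap e).Adj j i}.encard ≤ d :=
    (Set.encard_le_encard_of_injOn hmaps e.injective.injOn).trans (hdeg (e i))
  exact (Set.encard_le_coe_iff_finite_ncard_le.mp hle).2

end Degenerate

/-- A strategy in the hat guessing game on `G` with color set `C` in which every vertex makes up to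
`s` guesses, depending on the colors of its neighbors. -/
structure GuessingStrategy {V : Type*} (G : SimpleGraph V) (C : Type*) (s : ℕ) where
  guess (v : V) : ({w : V // G.Adj v w} → C) → Finset C
  card_guess_le (v : V) (c : {w : V // G.Adj v w} → C) : (guess v c).card ≤ s

namespace GuessingStrategy

universe u

variable {V C : Type*} {G : SimpleGraph V} {s : ℕ}

/-- On the coloring `χ`, some vertex has its own color among its guesses. -/
def Succeeds (σ : GuessingStrategy G C s) (χ : V → C) : Prop :=
  ∃ v, χ v ∈ σ.guess v fun w => χ w.1

/-- The strategy succeeds on every coloring. -/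
def IsWinning (σ : GuessingStrategy G C s) : Prop :=
  ∀ χ, σ.Succeeds χ

theorem IsWinning.hatWinning {q : ℕ} [NeZero q] {σ : GuessingStrategy G (Fin q) 1}
    (hσ : σ.IsWinning) : HatWinning G q := by
  choose g hg using fun v c => Finset.card_le_one_iff_subset_singleton.mp (σ.card_guess_le v c)
  refine ⟨g, fun χ => ?_⟩
  obtain ⟨v, hv⟩ := hσ χ
  exact ⟨v, (Finset.mem_singleton.mp (hg v _ hv)).symm⟩

/-- The strategy in which every vertex guesses all colors. -/
def guessAll [Fintype C] (G : SimpleGraph V) : GuessingStrategy G C (Fintype.card C) where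
  guess _ _ := Finset.univ
  card_guess_le _ _ := le_rfl

theorem isWinning_guessAll [Nonempty V] [Fintype C] :
    (guessAll G : GuessingStrategy G C (Fintype.card C)).IsWinning :=
  fun _ => ⟨Classical.arbitrary V, Finset.mem_univ _⟩

/-- The strategy on disjoint copies of `G` that plays `τ i` on the copy indexed by `i`. -/
def copies {ι : Type*} (τ : ι → GuessingStrategy G C s) :
    GuessingStrategy ((⊥ : SimpleGraph ι) □ G) C s where
  guess x c := (τ x.1).guess x.2 fun w => c ⟨(x.1, w.1), Or.inr ⟨w.2, rfl⟩⟩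
  card_guess_le _ _ := (τ _).card_guess_le _ _

theorem succeeds_copies {ι : Type*} {τ : ι → GuessingStrategy G C s} {χ : ι × V → C} :
    (copies τ).Succeeds χ ↔ ∃ i, (τ i).Succeeds fun v => χ (i, v) :=
  Prod.exists

open Classical in
/-- The strategy on the cone over `G` in which the vertices of `G` play `τ a` when the apex has the
color `a`, and the apex guesses the colors `a` for which `τ a` fails. -/
noncomputable def overCone [Fintype C] (τ : C → GuessingStrategy G C s)
    (hτ : ∀ χ, (Finset.univ.filter fun a => ¬(τ a).Succeeds χ).card ≤ s) :
    GuessingStrategy (cone G) C s where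
  guess
    | none => fun c => Finset.univ.filter fun a => ¬(τ a).Succeeds fun v => c ⟨some v, trivial⟩
    | some v => fun c => (τ (c ⟨none, trivial⟩)).guess v fun w => c ⟨some w.1, w.2⟩
  card_guess_le
    | none => fun _ => hτ _
    | some v => fun _ => (τ _).card_guess_le v _

open Classical in
theorem isWinning_overCone [Fintype C] {τ : C → GuessingStrategy G C s}
    (hτ : ∀ χ, (Finset.univ.filter fun a => ¬(τ a).Succeeds χ).card ≤ s) :
    (overCone τ hτ).IsWinning := by
  intro χ
  by_cases hsucc : (τ (χ none)).Succeeds fun v => χ (some v)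
  · obtain ⟨v, hv⟩ := hsucc
    exact ⟨some v, hv⟩
  · exact ⟨none, Finset.mem_filter.mpr ⟨Finset.mem_univ _, hsucc⟩⟩

theorem exists_split {β : Type*} {k : ℕ} (σ : GuessingStrategy G C k) {T : Finset β}
    (h : k ≤ T.card * s) :
    ∃ τ : β → GuessingStrategy G C s, ∀ χ, σ.Succeeds χ → ∃ b ∈ T, (τ b).Succeeds χ := by
  choose P hPcard hPcover using fun v c => exists_cover_card_le ((σ.card_guess_le v c).trans h)
  refine ⟨fun b => ⟨fun v c => P v c b, fun v c => hPcard v c b⟩, ?_⟩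
  rintro χ ⟨v, hv⟩
  obtain ⟨b, hb, hvb⟩ := hPcover v _ _ hv
  exact ⟨b, hb, v, hvb⟩

theorem IsWinning.exists_isWinning_cone [Finite C] {σ : GuessingStrategy G C (pronic s)}
    (hσ : σ.IsWinning) :
    ∃ τ : GuessingStrategy (cone ((⊥ : SimpleGraph {T : Finset C // T.card = s + 1}) □ G)) C s,
      τ.IsWinning := by
  classical
  have := Fintype.ofFinite C
  have hpronic (T : {T : Finset C // T.card = s + 1}) : pronic s ≤ T.1.card * s := by
    rw [T.2, mul_comm, pronic]
  choose τ hτ using fun T => σ.exists_split (hpronic T)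
  refine ⟨overCone (fun a => copies fun T => τ T a) fun χ => ?_, isWinning_overCone _⟩
  by_contra! hlt
  obtain ⟨T, hTsub, hTcard⟩ := Finset.exists_subset_card_eq (Nat.succ_le_of_lt hlt)
  obtain ⟨a, haT, ha⟩ := hτ ⟨T, hTcard⟩ _ (hσ fun v => χ (⟨T, hTcard⟩, v))
  exact (Finset.mem_filter.mp (hTsub haT)).2 (succeeds_copies.mpr ⟨_, ha⟩)

theorem exists_isDegenerate_isWinning {C : Type u} [Fintype C] {d s : ℕ}
    (hC : Fintype.card C = pronic^[d] s) :
    ∃ (V : Type u) (_ : Fintype V) (G : SimpleGraph V) (σ : GuessingStrategy G C s),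
      IsDegenerate G d ∧ σ.IsWinning := by
  induction d generalizing s with
  | zero =>
    obtain rfl : Fintype.card C = s := hC
    exact ⟨PUnit, inferInstance, ⊥, guessAll ⊥, isDegenerate_bot, isWinning_guessAll⟩
  | succ d ih =>
    obtain ⟨V, _, G, σ, hG, hσ⟩ := ih hC
    obtain ⟨τ, hτ⟩ := hσ.exists_isWinning_cone
    exact ⟨_, inferInstance, _, τ, isDegenerate_cone hG.bot_boxProd, hτ⟩

end GuessingStrategy

theorem exists_degenerate_sylvester_sub_one_le_hatGuessingNumber (d : ℕ) :
    ∃ (n : ℕ) (G : SimpleGraph (Fin n)),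
      (∀ i : Fin n, {j : Fin n | j < i ∧ G.Adj j i}.ncard ≤ d) ∧
      sylvester d - 1 ≤ hatGuessingNumber G := by
  have hcolors : sylvester d - 1 = pronic^[d] 1 := by
    rw [sylvester_eq_iterate_pronic_add_one, Nat.add_sub_cancel]
  have : NeZero (pronic^[d] 1) := ⟨(iterate_pronic_pos d one_pos).ne'⟩
  obtain ⟨V, _, G, σ, hG, hσ⟩ :=
    GuessingStrategy.exists_isDegenerate_isWinning (Fintype.card_fin (pronic^[d] 1))
  obtain ⟨G', ⟨e⟩, hdeg⟩ := hG.exists_iso_fin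
  exact ⟨_, G', hdeg, hcolors.trans_le (hσ.hatWinning.of_iso e).le_hatGuessingNumber⟩

/-- Sylvester's sequence satisfies `s_n = s_0 ⋯ s_{n-1} + 1`, hence
`s_d - 1 ≥ 2^(2^(d-1))` for `d ≥ 1`, and so for each `d ≥ 1` there is a
`d`-degenerate graph `G` with `HG(G) ≥ 2^(2^(d-1))`. -/
theorem sylvester_product_and_degenerate_lower :
    (∀ n : ℕ, 1 ≤ n → sylvester n = (∏ k ∈ Finset.range n, sylvester k) + 1) ∧
    (∀ d : ℕ, 1 ≤ d → 2 ^ 2 ^ (d - 1) ≤ sylvester d - 1) ∧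
    (∀ d : ℕ, 1 ≤ d → ∃ (n : ℕ) (G : SimpleGraph (Fin n)),
      (∀ i : Fin n, {j : Fin n | j < i ∧ G.Adj j i}.ncard ≤ d) ∧
      2 ^ 2 ^ (d - 1) ≤ hatGuessingNumber G) := by
  refine ⟨fun n _ => ?_, fun d hd => two_pow_two_pow_le_sylvester_sub_one hd, fun d hd => ?_⟩
  · rw [prod_range_sylvester, sylvester_eq_iterate_pronic_add_one]
  · obtain ⟨n, G, hdeg, hle⟩ := exists_degenerate_sylvester_sub_one_le_hatGuessingNumber d
    exact ⟨n, G, hdeg, (two_pow_two_pow_le_sylvester_sub_one hd).trans hle⟩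
end
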